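/- Let P be a finite pure weighted graded poset of rank d ≥ 2 with a standard weight scheme which is 2-skeleton regular with constants N^low_1, N^low_2, N^mid_1, R, where N^low_1 ≥ 3, N^mid_1 ≥ 2, and (N^low_2·N^low_1/N^mid_1 − 2)·R > N^low_1 − 2. Assume P is connected, each link P_x for x ∈ P(0) is connected, and there exist ν ≤ μ < 1 such that every nontrivial eigenvalue of the link adjacency operator A_x lies in [ν, μ] for all x ∈ P(0). Then every nontrivial eigenvalue λ of the adjacency operator A of P satisfies (ν/(N^low_1 − 1) − B)/(1 − ν) ≤ λ ≤ (μ/(N^low_1 − 1) − B)/(1 − μ), where B = (N^low_2·N^low_1 − N^mid_1)·R·(R−1)/((N^mid_1 − 1)·(N^mid_1)²·(N^low_1 − 1)²). -/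

import Mathlib

open Finset

attribute [local instance] Classical.propDecidable

noncomputable section

/-- A finite pure weighted graded poset of rank `d`, presented as a rank function
and a weight scheme on a finite partial order `P`. -/
structure WGP (P : Type) [Fintype P] [PartialOrder P] where
  /-- the rank of the poset -/
  d : ℤ
  /-- the rank function -/
  rk : P → ℤ
  rk_mono : Monotone rk
  rk_lb : ∀ x, -1 ≤ rk x
  rk_ub : ∀ x, rk x ≤ d
  rk_covBy : ∀ a b : P, a ⋖ b → rk b = rk a + 1
  bot_unique : ∃! x : P, rk x = -1
  isPure : ∀ x : P, ∃ y : P, rk y = d ∧ x ≤ y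
  /-- the weight function -/
  m : P → ℝ
  m_pos : ∀ x, 0 < m x
  /-- the transition probabilities: `p y x` is `p_{y → x}` -/
  p : P → P → ℝ
  p_nonneg : ∀ y x, 0 ≤ p y x
  p_pos_iff : ∀ y x, 0 < p y x ↔ x ⋖ y
  p_sum : ∀ y, 0 ≤ rk y → ∑ x ∈ univ.filter (fun x => x ⋖ y), p y x = 1
  m_eq : ∀ x, rk x < d → m x = ∑ y ∈ univ.filter (fun y => x ⋖ y), p y x * m y
  m_bot : ∀ x, rk x = -1 → m x = 1

/-- `T` has at most `n` eigenvalues greater than `c`, counted with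
(geometric) multiplicity. -/
def eigMultAboveLe {V : Type*} [AddCommGroup V] [Module ℝ V]
    (T : Module.End ℝ V) (c : ℝ) (n : ℕ) : Prop :=
  ∀ s : Finset ℝ, (∀ μ ∈ s, c < μ) →
    ∑ μ ∈ s, Module.finrank ℝ (T.eigenspace μ) ≤ n

/-- `μ` is the second largest eigenvalue of `T`, counted with multiplicity. -/
def IsSecondLargestEig {V : Type*} [AddCommGroup V] [Module ℝ V]
    (T : Module.End ℝ V) (μ : ℝ) : Prop :=
  T.HasEigenvalue μ ∧ eigMultAboveLe T μ 1 ∧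
    ∃ s : Finset ℝ, (∀ ν ∈ s, μ ≤ ν) ∧
      2 ≤ ∑ ν ∈ s, Module.finrank ℝ (T.eigenspace ν)

/-- `ν` is the least eigenvalue of `T`. -/
def IsLeastEig {V : Type*} [AddCommGroup V] [Module ℝ V]
    (T : Module.End ℝ V) (ν : ℝ) : Prop :=
  T.HasEigenvalue ν ∧ ∀ c : ℝ, T.HasEigenvalue c → ν ≤ c

/-- `λ(T) ≤ lam`, i.e. the second largest eigenvalue of `T` (with multiplicity)
is at most `lam` and the least eigenvalue is at least `-lam`. -/
def lamBd {V : Type*} [AddCommGroup V] [Module ℝ V]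
    (T : Module.End ℝ V) (lam : ℝ) : Prop :=
  eigMultAboveLe T lam 1 ∧ ∀ c : ℝ, T.HasEigenvalue c → -lam ≤ c

namespace WGP

variable {P : Type} [Fintype P] [PartialOrder P] (W : WGP P)

/-- The level set `P(i)`. -/
def lvl (i : ℤ) : Finset P := univ.filter (fun x => W.rk x = i)

/-- The weighted inner product on `C^i`. -/
def innerAt (i : ℤ) (f g : P → ℝ) : ℝ := ∑ x ∈ W.lvl i, W.m x * f x * g x

/-- The squared norm on `C^i`. -/
def normSqAt (i : ℤ) (f : P → ℝ) : ℝ := W.innerAt i f f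

/-- The norm on `C^i`. -/
def normAt (i : ℤ) (f : P → ℝ) : ℝ := Real.sqrt (W.normSqAt i f)

/-- The matrix of transition probabilities : entry `(y, x)` is `p_{y→x}`,
which vanishes unless `x ⋖ y`.  This is also the matrix of the up operator. -/
def upMat : Matrix P P ℝ := Matrix.of fun y x => W.p y x

/-- The matrix of the down operator. -/
def downMat : Matrix P P ℝ := Matrix.of fun x y => W.p y x * W.m y / W.m x

/-- The up operator `U`. -/
def Up (f : P → ℝ) : P → ℝ := W.upMat.mulVec f

/-- The down operator `D`. -/
def Down (f : P → ℝ) : P → ℝ := W.downMat.mulVec f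

/-- `chSum x y = Σ_{c ∈ Ch(y→x)} p(c)`, the total `p`-weight of maximal chains
from `x` up to `y` (the entry of the corresponding power of the transition
matrix). -/
def chSum (x y : P) : ℝ := (W.upMat ^ (W.rk y - W.rk x).toNat) y x

/-- The induced weight function of the link `P_x`. -/
def mL (x y : P) : ℝ := W.m y / W.m x * W.chSum x y

/-- The induced transition probabilities of the link `P_x` :
`pL x z y = (p_x)_{z → y}`. -/
def pL (x z y : P) : ℝ := W.p z y * W.chSum x y / W.chSum x z

/-- The level set `P_x(j)` of the link of `x`. -/
def linkLvl (x : P) (j : ℤ) : Finset P :=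
  univ.filter (fun y => x ≤ y ∧ W.rk y = W.rk x + 1 + j)

/-- The inner product of the link `P_x` at link-level `j`. -/
def innerL (x : P) (j : ℤ) (f g : P → ℝ) : ℝ :=
  ∑ y ∈ W.linkLvl x j, W.mL x y * f y * g y

/-- The matrix of the up operator of the link `P_x`. -/
def upMatL (x : P) : Matrix P P ℝ :=
  Matrix.of fun z y => if y ⋖ z ∧ x ≤ y then W.pL x z y else 0

/-- The matrix of the down operator of the link `P_x`. -/
def downMatL (x : P) : Matrix P P ℝ :=
  Matrix.of fun y z => if y ⋖ z then W.pL x z y * W.mL x z / W.mL x y else 0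

/-- The up operator of the link `P_x`. -/
def UpL (x : P) (f : P → ℝ) : P → ℝ := (W.upMatL x).mulVec f

/-- The down operator of the link `P_x`. -/
def DownL (x : P) (f : P → ℝ) : P → ℝ := (W.downMatL x).mulVec f

/-- The up-down walk `M^+_{x,0}` of the link `P_x`. -/
def MplusL (x : P) (f : P → ℝ) : P → ℝ := W.DownL x (W.UpL x f)

/-- The down-up walk `M^-_{x,0}` of the link `P_x`. -/
def MminusL (x : P) (f : P → ℝ) : P → ℝ := W.UpL x (W.DownL x f)

/-- The adjacency matrix. -/
def adjMat : Matrix P P ℝ := Matrix.of fun y x =>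
  if x = y then 0 else
    ∑ z ∈ univ.filter (fun z => x ⋖ z ∧ y ⋖ z),
      W.m z * W.p z x * W.p z y / ((1 - W.p z y) * W.m y)

/-- The adjacency operator. -/
def Adj (f : P → ℝ) : P → ℝ := W.adjMat.mulVec f

/-- The adjacency matrix of the link `P_x`. -/
def adjMatL (x : P) : Matrix P P ℝ := Matrix.of fun y w =>
  if w = y then 0 else
    ∑ z ∈ univ.filter (fun z => w ⋖ z ∧ y ⋖ z),
      W.mL x z * W.pL x z w * W.pL x z y / ((1 - W.pL x z y) * W.mL x y)

/-- The adjacency operator of the link `P_x`. -/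
def AdjL (x : P) (f : P → ℝ) : P → ℝ := (W.adjMatL x).mulVec f

/-- The up-down walk `M^+_l` as an endomorphism of `C^l`. -/
def MplusEnd (l : ℤ) : Module.End ℝ ({x : P // W.rk x = l} → ℝ) :=
  ((W.downMat * W.upMat).submatrix Subtype.val Subtype.val).mulVecLin

/-- The up-down walk `M^+_{x,0}` as an endomorphism of `C^0(P_x)`. -/
def MplusEndL (x : P) : Module.End ℝ ({y : P // x ⋖ y} → ℝ) :=
  ((W.downMatL x * W.upMatL x).submatrix Subtype.val Subtype.val).mulVecLin

/-- The adjacency operator `A_x` of the link `P_x` as an endomorphism of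
`C^0(P_x)`. -/
def AdjEndL (x : P) : Module.End ℝ ({y : P // x ⋖ y} → ℝ) :=
  ((W.adjMatL x).submatrix Subtype.val Subtype.val).mulVecLin

/-- A standard weight scheme. -/
def Standard : Prop :=
  ∀ y x : P, x ⋖ y → W.p y x = 1 / ((univ.filter (fun z => z ⋖ y)).card : ℝ)

/-- `P` is lower regular at level `i` with constant `N`. -/
def LowerRegAt (i : ℤ) (N : ℕ) : Prop :=
  ∀ y : P, W.rk y = i → (univ.filter (fun z => z ⋖ y)).card = N

/-- `P` is middle regular at level `i` with constant `N`. -/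
def MiddleRegAt (i : ℤ) (N : ℕ) : Prop :=
  ∀ x z : P, W.rk x = i + 1 → W.rk z = i - 1 → z < x →
    (univ.filter (fun y => z ⋖ y ∧ y ⋖ x)).card = N

/-- `P` is `∨∧`-regular at level `i` with constant `N`. -/
def WedgeRegAt (i : ℤ) (N : ℕ) : Prop :=
  ∀ y₁ y₂ : P, W.rk y₁ = i → W.rk y₂ = i → y₁ ≠ y₂ → (∃ z, y₁ ⋖ z ∧ y₂ ⋖ z) →
    (univ.filter (fun s => s ⋖ y₁ ∧ s ⋖ y₂)).card = N

/-- `P` is `⅄`-regular with constant `R`. -/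
def WyeReg (R : ℕ) : Prop :=
  ∀ u y₁ y₂ : P, W.rk u = 2 → W.rk y₁ = 0 → W.rk y₂ = 0 → y₁ ≠ y₂ →
    y₁ < u → y₂ < u →
    (univ.filter (fun z => y₁ ⋖ z ∧ y₂ ⋖ z ∧ z ⋖ u)).card = R

/-- Property UL.1 with constants `c`. -/
def UL1 (c : ℤ → ℝ) : Prop :=
  ∀ l : ℤ, 0 ≤ l → l < W.d → ∀ y : P, W.rk y = l → ∀ x : P, y ⋖ x →
    ∑ z ∈ univ.filter (fun z => z ⋖ y), W.p y z ^ 2 / W.chSum z x = c l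

/-- Property UL.2 with constants `c`. -/
def UL2 (c : ℤ → ℝ) : Prop :=
  ∀ l : ℤ, 0 ≤ l → l < W.d → ∀ y₁ y₂ : P, W.rk y₁ = l → W.rk y₂ = l → y₁ ≠ y₂ →
    ∀ x : P, y₁ ⋖ x → y₂ ⋖ x →
    ∑ z ∈ univ.filter (fun z => z ⋖ y₁ ∧ z ⋖ y₂),
      W.p y₁ z * W.p y₂ z / W.chSum z x = c l

/-- Property UL.3 with constants `c`. -/
def UL3 (c : ℤ → ℝ) : Prop :=
  ∀ l : ℤ, 0 ≤ l → l < W.d → ∀ y : P, W.rk y = l →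
    ∑ x ∈ univ.filter (fun x => y ⋖ x), W.m x * W.p x y ^ 2 = c l * W.m y

/-- Property AL. -/
def AL : Prop :=
  ∀ l : ℤ, 0 ≤ l → l ≤ W.d - 1 → ∀ x y : P, W.rk x = l → W.rk y = l → x ≠ y →
    ∑ z ∈ univ.filter (fun z => x ⋖ z ∧ y ⋖ z),
        W.m z * W.p z x * W.p z y / (1 - W.p z x)
    = ∑ z ∈ univ.filter (fun z => x ⋖ z ∧ y ⋖ z),
        W.m z * W.p z x * W.p z y *
          ∑ s ∈ univ.filter (fun s => s ⋖ x ∧ s ⋖ y),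
            W.p x s * W.p y s / (W.chSum s z - W.p z x * W.p x s)

/-- Equation TL.1 with constant `c`. -/
def TL1 (c : ℝ) : Prop :=
  ∀ y : P, W.rk y = 0 →
    c * W.m y = ∑ z ∈ univ.filter (fun z => y ⋖ z), W.m z * W.p z y ^ 2 *
      ∑ x ∈ univ.filter (fun x => x ⋖ z ∧ x ≠ y), W.p z x / (1 - W.p z x) ^ 2

/-- Equation TL.2 with constant `c`. -/
def TL2 (c : ℝ) : Prop :=
  ∀ y₁ y₂ : P, W.rk y₁ = 0 → W.rk y₂ = 0 → y₁ ≠ y₂ →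
    c * ∑ z ∈ univ.filter (fun z => y₁ ⋖ z ∧ y₂ ⋖ z),
          W.m z * W.p z y₁ * W.p z y₂ / (1 - W.p z y₁)
    = ∑ z ∈ univ.filter (fun z => y₁ ⋖ z ∧ y₂ ⋖ z),
        W.m z * W.p z y₁ * W.p z y₂ *
          ∑ x ∈ univ.filter (fun x => x ⋖ z ∧ x ≠ y₁ ∧ x ≠ y₂),
            W.p z x / (1 - W.p z x) ^ 2

/-- Equation TL.3 with constant `c`. -/
def TL3 (c : ℝ) : Prop :=
  ∀ y : P, W.rk y = 0 →
    c * W.m y =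
      ∑ x ∈ univ.filter (fun x => W.rk x = 0 ∧ x ≠ y),
        ∑ z ∈ univ.filter (fun z => x ⋖ z ∧ y ⋖ z),
          ∑ w ∈ univ.filter (fun w => w ≠ z ∧ x ⋖ w ∧ y ⋖ w),
            ∑ u ∈ univ.filter (fun u => z ⋖ u ∧ w ⋖ u),
              W.m u * W.p u z * W.p u w * W.p w y * W.p z y * W.p w x * W.p z x /
                (W.chSum x u * (1 - W.p u z * W.p z x / W.chSum x u) *
                  (1 - W.p w x) * (1 - W.p z x))

/-- Equation TL.4 with constant `c`. -/
def TL4 (c : ℝ) : Prop :=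
  ∀ y₁ y₂ : P, W.rk y₁ = 0 → W.rk y₂ = 0 → y₁ ≠ y₂ →
    c * ∑ z ∈ univ.filter (fun z => y₁ ⋖ z ∧ y₂ ⋖ z),
          W.m z * W.p z y₁ * W.p z y₂ / (1 - W.p z y₁)
    = ∑ x ∈ univ.filter (fun x => W.rk x = 0 ∧ x ≠ y₁ ∧ x ≠ y₂),
        ∑ z ∈ univ.filter (fun z => x ⋖ z ∧ y₂ ⋖ z),
          ∑ w ∈ univ.filter (fun w => w ≠ z ∧ x ⋖ w ∧ y₁ ⋖ w),
            ∑ u ∈ univ.filter (fun u => z ⋖ u ∧ w ⋖ u),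
              W.m u * W.p u z * W.p u w * W.p w y₁ * W.p z y₂ * W.p w x * W.p z x /
                (W.chSum x u * (1 - W.p u z * W.p z x / W.chSum x u) *
                  (1 - W.p w x) * (1 - W.p z x))

/-- The induced function `f̂_x ∈ C^0(P_x)` of `f ∈ C^0`. -/
def hatF (x : P) (f : P → ℝ) : P → ℝ := fun z =>
  (1 / (1 - W.p z x)) * ∑ y ∈ univ.filter (fun y => y ≠ x ∧ y ⋖ z), W.p z y * f y

/-- `P` is connected: the Markov chain `M^+_0` on `P(0)` is irreducible. -/
def Connected : Prop :=
  ∀ y z : P, W.rk y = 0 → W.rk z = 0 →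
    ∃ j : ℕ, 0 < j ∧ ((W.downMat * W.upMat) ^ j) z y ≠ 0

/-- The link `P_x` is connected: the Markov chain `M^+_{x,0}` on `P_x(0)` is
irreducible. -/
def LinkConnected (x : P) : Prop :=
  ∀ y z : P, x ⋖ y → x ⋖ z →
    ∃ j : ℕ, 0 < j ∧ ((W.downMatL x * W.upMatL x) ^ j) z y ≠ 0

/-- `c` is a nontrivial eigenvalue of the adjacency operator `A` of `P`,
i.e. one with an eigenvector orthogonal to the constants. -/
def IsNontrivEigAdj (c : ℝ) : Prop :=
  ∃ f : P → ℝ, (∃ y, W.rk y = 0 ∧ f y ≠ 0) ∧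
    (∀ y, W.rk y = 0 → W.Adj f y = c * f y) ∧
    W.innerAt 0 f (fun _ => 1) = 0

/-- `c` is a nontrivial eigenvalue of the adjacency operator `A_x` of the
link `P_x`. -/
def IsNontrivEigAdjL (x : P) (c : ℝ) : Prop :=
  ∃ f : P → ℝ, (∃ y, x ⋖ y ∧ f y ≠ 0) ∧
    (∀ y, x ⋖ y → W.AdjL x f y = c * f y) ∧
    W.innerL x 0 f (fun _ => 1) = 0

end WGP

/-!
Write `N₁ = N^low_1` and `M = N^mid_1`, and for `f` on the atoms let `E₀ = ⟨f, f⟩` and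
`E₁ = ⟨A f, f⟩`. Both energies localize to the links of the atoms: with `f̂_x` the function on the
atoms of `P_x` that sends `y` to the mean of `f` over the atoms other than `x` below `y`,

* `(A f) x` is the mean of `f̂_x` over the link of `x`;
* `∑ m(x) ⟨f̂_x, f̂_x⟩_x = (E₀ + (N₁ - 2) E₁) / (N₁ - 1)`;
* `∑ m(x) ⟨A_x f̂_x, f̂_x⟩_x = E₁ + B (E₀ - E₁)` with `B = (R - 1) / ((M - 1) (N₁ - 1))`, by
  `2`-skeleton regularity.

Double counting below an element of rank two gives `(N₁ N₂ - M) R = M² (N₁ - 1)`, so that this `B`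
is the constant of the theorem. If `A f = λ f`, then bounding `A_x` on the part of `f̂_x`
orthogonal to the constants gives `(1 - λ) (μ / (N₁ - 1) - B - (1 - μ) λ) ≥ 0`, and the reverse
inequality for `ν`. As `E₀ - E₁` is a Dirichlet form, connectedness gives `λ < 1`, and `1 - λ` can
be cancelled.
-/

section PowerSums

variable {ι A : Type*} [CommRing A]

theorem sum_sum_sub_mul_self (s : Finset ι) (f : ι → A) :
    ∑ x ∈ s, (∑ y ∈ s, f y - f x) * f x = (∑ y ∈ s, f y) ^ 2 - ∑ y ∈ s, f y ^ 2 := by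
  simp only [sub_mul, sum_sub_distrib, ← mul_sum, ← sq]

theorem sum_sum_sub_sq (s : Finset ι) (f : ι → A) :
    ∑ x ∈ s, (∑ y ∈ s, f y - f x) ^ 2
      = (#s - 2) * (∑ y ∈ s, f y) ^ 2 + ∑ y ∈ s, f y ^ 2 := by
  simp only [sub_sq, sum_add_distrib, sum_sub_distrib, ← mul_sum, sum_const, nsmul_eq_mul]
  ring

theorem sum_card_mul_sub_sum_sq (s : Finset ι) (f : ι → A) :
    ∑ x ∈ s, (#s * f x - ∑ y ∈ s, f y) ^ 2
      = #s * (#s * ∑ y ∈ s, f y ^ 2 - (∑ y ∈ s, f y) ^ 2) := by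
  simp only [sub_sq, sum_add_distrib, sum_sub_distrib, mul_pow, ← mul_sum, ← sum_mul,
    sum_const, nsmul_eq_mul]
  ring

end PowerSums

section Spectral

open scoped Matrix

variable {ι : Type*} [Fintype ι]

theorem posSemidef_of_weighted_eigenvalues_nonneg {w : ι → ℝ} (hw : ∀ i, 0 < w i)
    {L : Matrix ι ι ℝ} (hL : L.IsHermitian)
    (heig : ∀ (c : ℝ) (v : ι → ℝ), v ≠ 0 → L *ᵥ v = c • (w * v) → 0 ≤ c) :
    L.PosSemidef := by
  set D : Matrix ι ι ℝ := Matrix.diagonal fun i => (√(w i))⁻¹ with hD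
  have hs : ∀ i, √(w i) ≠ 0 := fun i => (Real.sqrt_pos.mpr (hw i)).ne'
  have hDunit : IsUnit D :=
    Matrix.isUnit_diagonal.mpr (Pi.isUnit_iff.mpr fun i => (inv_ne_zero (hs i)).isUnit)
  have hDstar : star D = D := by simp [hD, Matrix.star_eq_conjTranspose]
  rw [← Matrix.IsUnit.posSemidef_star_left_conjugate_iff hDunit, hDstar,
    Matrix.posSemidef_iff_isHermitian_and_spectrum_nonneg]
  refine ⟨?_, fun c hc => ?_⟩
  · simpa only [← Matrix.star_eq_conjTranspose, hDstar] using
      Matrix.isHermitian_conjTranspose_mul_mul D hL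
  · rw [← Matrix.spectrum_toLin', ← Module.End.hasEigenvalue_iff_mem_spectrum] at hc
    obtain ⟨v, hv⟩ := hc.exists_hasEigenvector
    have hDv : D *ᵥ (L *ᵥ (D *ᵥ v)) = c • v := by simpa using hv.apply_eq_smul
    refine heig c (D *ᵥ v) (fun h0 => hv.2 ?_) ?_
    · exact Matrix.mulVec_injective_of_isUnit hDunit (by simpa using h0)
    · ext i
      have hi := congrFun hDv i
      rw [hD, Matrix.mulVec_diagonal, ← hD, inv_mul_eq_iff_eq_mul₀ (hs i)] at hi
      rw [hi]
      simp only [Pi.smul_apply, smul_eq_mul, Pi.mul_apply, hD, Matrix.mulVec_diagonal]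
      nth_rw 2 [← Real.mul_self_sqrt (hw i).le]
      field_simp [hs i]

theorem sum_mul_mulVec_of_detailedBalance {w : ι → ℝ} {A : Matrix ι ι ℝ} {τ : ℝ}
    (hA : ∀ i j, w i * A i j = w j * A j i) (hτ : A *ᵥ 1 = τ • 1) (v : ι → ℝ) :
    ∑ i, w i * (A *ᵥ v) i = τ * ∑ i, w i * v i := by
  simp only [Matrix.mulVec, dotProduct, mul_sum]
  rw [sum_comm]
  refine sum_congr rfl fun j _ => ?_
  have hj : ∑ i, A j i = τ := by simpa [Matrix.mulVec, dotProduct] using congrFun hτ j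
  calc ∑ i, w i * (A i j * v j) = ∑ i, w j * v j * A j i :=
        sum_congr rfl fun i _ => by rw [← mul_assoc, hA]; ring
    _ = τ * (w j * v j) := by rw [← mul_sum, hj, mul_comm]

/-- A symmetric matrix that agrees with `w (t - A)` on the vectors of `w`-mean zero and, when
`∑ i, w i = 1` and `A *ᵥ 1 = τ • 1`, annihilates the constants; it is positive semidefinite exactly
when `t` bounds the nontrivial eigenvalues of `A`. -/
def gapMatrix (w : ι → ℝ) (A : Matrix ι ι ℝ) (τ t : ℝ) : Matrix ι ι ℝ :=
  Matrix.diagonal w * (t • 1 - A) + (τ - t) • Matrix.vecMulVec w w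

variable {w : ι → ℝ} {A : Matrix ι ι ℝ} {τ t : ℝ}

theorem gapMatrix_mulVec (v : ι → ℝ) (i : ι) :
    (gapMatrix w A τ t *ᵥ v) i
      = w i * (t * v i - (A *ᵥ v) i) + (τ - t) * (w i * ∑ j, w j * v j) := by
  simp only [gapMatrix, Matrix.add_mulVec, Pi.add_apply, ← Matrix.mulVec_mulVec,
    Matrix.mulVec_diagonal, Matrix.sub_mulVec, Pi.sub_apply, Matrix.smul_mulVec,
    Matrix.one_mulVec, Pi.smul_apply, smul_eq_mul, Matrix.vecMulVec_mulVec]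
  simp [dotProduct]

theorem isHermitian_gapMatrix (hA : ∀ i j, w i * A i j = w j * A j i) :
    (gapMatrix w A τ t).IsHermitian := by
  ext i j
  by_cases hij : i = j
  · simp [hij]
  · simp [gapMatrix, Matrix.vecMulVec_apply, Matrix.one_apply_ne hij,
      Matrix.one_apply_ne (Ne.symm hij), hA i j, mul_comm (w i) (w j)]

theorem posSemidef_gapMatrix (hw : ∀ i, 0 < w i) (hw1 : ∑ i, w i = 1)
    (hA : ∀ i j, w i * A i j = w j * A j i) (hτ : A *ᵥ 1 = τ • 1)
    (heig : ∀ (c : ℝ) (v : ι → ℝ), v ≠ 0 → A *ᵥ v = c • v → ∑ i, w i * v i = 0 → c ≤ t) :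
    (gapMatrix w A τ t).PosSemidef := by
  refine posSemidef_of_weighted_eigenvalues_nonneg hw (isHermitian_gapMatrix hA)
    fun c v hv hv_eig => ?_
  have hpt : ∀ i, w i * (t * v i - (A *ᵥ v) i) + (τ - t) * (w i * ∑ j, w j * v j)
      = c * (w i * v i) := fun i => by rw [← gapMatrix_mulVec, hv_eig]; rfl
  have hmean : c * ∑ i, w i * v i = 0 := by
    have hsum := sum_congr rfl fun i (_ : i ∈ univ) => hpt i
    simp only [mul_sub, sum_add_distrib, sum_sub_distrib, mul_left_comm (w _) t, ← mul_sum,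
      ← sum_mul, hw1, sum_mul_mulVec_of_detailedBalance hA hτ] at hsum
    linarith
  obtain hc | hv0 := mul_eq_zero.mp hmean
  · exact hc.ge
  · refine sub_le_self_iff t |>.mp (heig (t - c) v hv ?_ hv0)
    ext i
    have hi := hpt i
    rw [hv0] at hi
    refine mul_left_cancel₀ (hw i).ne' ?_
    simp only [Pi.smul_apply, smul_eq_mul]
    linarith

theorem quadraticForm_le_of_nontrivial_eigenvalues_le (hw : ∀ i, 0 < w i) (hw1 : ∑ i, w i = 1)
    (hA : ∀ i j, w i * A i j = w j * A j i) (hτ : A *ᵥ 1 = τ • 1)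
    (heig : ∀ (c : ℝ) (v : ι → ℝ), v ≠ 0 → A *ᵥ v = c • v → ∑ i, w i * v i = 0 → c ≤ t)
    (g : ι → ℝ) :
    ∑ i, w i * (A *ᵥ g) i * g i
      ≤ t * ∑ i, w i * g i ^ 2 + (τ - t) * (∑ i, w i * g i) ^ 2 := by
  have hform : g ⬝ᵥ gapMatrix w A τ t *ᵥ g
      = t * ∑ i, w i * g i ^ 2 + (τ - t) * (∑ i, w i * g i) ^ 2
        - ∑ i, w i * (A *ᵥ g) i * g i := by
    simp only [dotProduct, gapMatrix_mulVec, sq, sum_mul, mul_sum, ← sum_add_distrib,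
      ← sum_sub_distrib]
    refine sum_congr rfl fun i _ => ?_
    simp only [← mul_sum, ← sum_mul]
    ring
  have hpos := (posSemidef_gapMatrix hw hw1 hA hτ heig).dotProduct_mulVec_nonneg g
  rw [star_trivial, hform] at hpos
  linarith

theorem le_quadraticForm_of_le_nontrivial_eigenvalues (hw : ∀ i, 0 < w i) (hw1 : ∑ i, w i = 1)
    (hA : ∀ i j, w i * A i j = w j * A j i) (hτ : A *ᵥ 1 = τ • 1)
    (heig : ∀ (c : ℝ) (v : ι → ℝ), v ≠ 0 → A *ᵥ v = c • v → ∑ i, w i * v i = 0 → t ≤ c)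
    (g : ι → ℝ) :
    t * ∑ i, w i * g i ^ 2 + (τ - t) * (∑ i, w i * g i) ^ 2
      ≤ ∑ i, w i * (A *ᵥ g) i * g i := by
  have hneg := quadraticForm_le_of_nontrivial_eigenvalues_le (A := -A) (τ := -τ) (t := -t)
    hw hw1 (by simpa using hA) (by rw [Matrix.neg_mulVec, hτ, neg_smul])
    (fun c v hv hAv hv0 => ?_) g
  · simp only [Matrix.neg_mulVec, Pi.neg_apply, mul_neg, neg_mul, sum_neg_distrib] at hneg
    linarith
  · rw [Matrix.neg_mulVec, neg_eq_iff_eq_neg, ← neg_smul] at hAv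
    linarith [heig (-c) v hv hAv hv0]

end Spectral

namespace WGP

variable {P : Type} [Fintype P] [PartialOrder P] (W : WGP P)

section Covers

variable {W} {i j : ℤ} {x y z : P}

theorem mem_lvl : x ∈ W.lvl i ↔ W.rk x = i := by simp [lvl]

variable (W) in
theorem rk_strictMono : StrictMono W.rk := fun x y hxy => by
  obtain ⟨z, hxz, hzy⟩ := exists_covBy_le_of_lt hxy
  have := W.rk_covBy x z hxz
  have := W.rk_mono hzy
  lia

variable (W) in
theorem covBy_iff : x ⋖ y ↔ x ≤ y ∧ W.rk y = W.rk x + 1 := by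
  refine ⟨fun h => ⟨h.le, W.rk_covBy x y h⟩, fun ⟨hle, hrk⟩ => ⟨?_, fun z hxz hzy => ?_⟩⟩
  · exact hle.lt_of_ne fun h => by simp [h] at hrk
  · have := W.rk_strictMono hxz
    have := W.rk_strictMono hzy
    lia

theorem linkLvl_zero : W.linkLvl x 0 = univ.filter (x ⋖ ·) := by
  ext y
  simp [linkLvl, W.covBy_iff]

theorem p_eq_zero (h : ¬x ⋖ z) : W.p z x = 0 :=
  ((W.p_nonneg z x).eq_or_lt.resolve_right fun hp => h ((W.p_pos_iff z x).mp hp)).symm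

theorem exists_covBy_of_rk_lt (hx : W.rk x < W.d) : ∃ z, x ⋖ z := by
  obtain ⟨y, hy, hxy⟩ := W.isPure x
  obtain ⟨z, hxz, -⟩ := exists_covBy_le_of_lt (hxy.lt_of_ne fun h => by lia)
  exact ⟨z, hxz⟩

theorem sum_lvl_sum_covBy_comm (hij : i + 1 = j) (φ : P → P → ℝ) :
    ∑ x ∈ W.lvl i, ∑ z with x ⋖ z, φ x z = ∑ z ∈ W.lvl j, ∑ x with x ⋖ z, φ x z := by
  refine sum_comm' fun x z => ?_
  simp only [mem_lvl, mem_filter, mem_univ, true_and]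
  exact ⟨fun ⟨hx, h⟩ => ⟨h, by rw [W.rk_covBy x z h, hx, hij]⟩,
    fun ⟨h, hz⟩ => ⟨by linarith [W.rk_covBy x z h, hz], h⟩⟩

end Covers

section AdjacencyAsLocalMean

/-- The sum of `f` over the elements covered by `z`. -/
def coveredSum (f : P → ℝ) (z : P) : ℝ := ∑ y with y ⋖ z, f y

/-- The elements strictly between `x` and `u` in an interval of length two. -/
def between (x u : P) : Finset P := univ.filter fun z => x ⋖ z ∧ z ⋖ u

theorem sum_adjacencyKernel_mul (m : P → ℝ) (p : P → P → ℝ) (y : P) (f : P → ℝ) :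
    ∑ x, (if x = y then 0 else
        ∑ z with x ⋖ z ∧ y ⋖ z, m z * p z x * p z y / ((1 - p z y) * m y)) * f x
      = ∑ z with y ⋖ z, m z * p z y / m y *
          (1 / (1 - p z y) * ∑ x with x ≠ y ∧ x ⋖ z, p z x * f x) := by
  simp only [ite_mul, zero_mul, sum_mul, mul_sum, ← ite_not (_ = y), ← sum_filter]
  refine (sum_comm' (t' := univ.filter (y ⋖ ·))
    (s' := fun z => univ.filter fun x => x ≠ y ∧ x ⋖ z) fun x z => ?_).trans
    (sum_congr rfl fun z _ => sum_congr rfl fun x _ => ?_)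
  · simp only [mem_filter, mem_univ, true_and]
    tauto
  · simp only [div_eq_mul_inv, mul_inv]
    ring

variable {W} {x : P}

theorem chSum_of_rk_eq_add_one {z : P} (h : W.rk z = W.rk x + 1) : W.chSum x z = W.p z x := by
  simp [chSum, h, upMat]

theorem mL_of_covBy {z : P} (h : x ⋖ z) : W.mL x z = W.m z / W.m x * W.p z x := by
  rw [mL, chSum_of_rk_eq_add_one (W.rk_covBy x z h)]

theorem mL_pos_of_covBy {z : P} (h : x ⋖ z) : 0 < W.mL x z := by
  rw [mL_of_covBy h]
  exact mul_pos (div_pos (W.m_pos z) (W.m_pos x)) ((W.p_pos_iff z x).mpr h)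

theorem innerL_zero (f g : P → ℝ) :
    W.innerL x 0 f g = ∑ z with x ⋖ z, W.mL x z * f z * g z := by
  rw [innerL, linkLvl_zero]

theorem innerL_zero_one_one (hx : W.rk x < W.d) :
    W.innerL x 0 (fun _ => 1) (fun _ => 1) = 1 := by
  have hm := (W.m_pos x).ne'
  refine mul_left_cancel₀ hm ?_
  rw [innerL_zero, mul_one, mul_sum]
  conv_rhs => rw [W.m_eq x hx]
  refine sum_congr rfl fun z hz => ?_
  rw [mL_of_covBy (mem_filter.mp hz).2]
  field_simp

theorem adj_eq_innerL_hatF (f : P → ℝ) :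
    W.Adj f x = W.innerL x 0 (W.hatF x f) fun _ => 1 := by
  simp only [Adj, adjMat, Matrix.mulVec, dotProduct, Matrix.of_apply]
  rw [sum_adjacencyKernel_mul, innerL_zero]
  refine sum_congr rfl fun z hz => ?_
  rw [mL_of_covBy (mem_filter.mp hz).2, hatF]
  ring

theorem adjL_eq_sum_covBy (g : P → ℝ) (z : P) :
    W.AdjL x g z = ∑ u with z ⋖ u, W.mL x u * W.pL x u z / W.mL x z *
      (1 / (1 - W.pL x u z) * ∑ w with w ≠ z ∧ w ⋖ u, W.pL x u w * g w) := by
  simp only [AdjL, adjMatL, Matrix.mulVec, dotProduct, Matrix.of_apply]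
  exact sum_adjacencyKernel_mul (W.mL x) (W.pL x) z g

end AdjacencyAsLocalMean

section StandardScheme

variable {W} {i j : ℤ} {N : ℕ} {x z : P}

theorem LowerRegAt.cast_ne_zero (hl : W.LowerRegAt j N) (hz : W.rk z = j) (hxz : x ⋖ z) :
    (N : ℝ) ≠ 0 := by
  rw [← hl z hz, Nat.cast_ne_zero]
  exact card_ne_zero_of_mem (mem_filter.mpr ⟨mem_univ x, hxz⟩)

theorem Standard.p_eq (hstd : W.Standard) (hl : W.LowerRegAt j N) (hz : W.rk z = j)
    (hxz : x ⋖ z) : W.p z x = 1 / N := by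
  rw [hstd z x hxz, hl z hz]

theorem Standard.sum_covBy_m (hstd : W.Standard) (hl : W.LowerRegAt j N)
    (hx : W.rk x + 1 = j) (hj : j ≤ W.d) : ∑ z with x ⋖ z, W.m z = N * W.m x := by
  rw [W.m_eq x (by lia), mul_sum]
  refine sum_congr rfl fun z hz => ?_
  have hxz : x ⋖ z := (mem_filter.mp hz).2
  have hz : W.rk z = j := (W.rk_covBy x z hxz).trans hx
  rw [hstd.p_eq hl hz hxz, ← mul_assoc, mul_one_div_cancel (hl.cast_ne_zero hz hxz), one_mul]

theorem Standard.sum_lvl_m_mul_coveredSum (hstd : W.Standard) (hl : W.LowerRegAt j N)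
    (hij : i + 1 = j) (hj : j ≤ W.d) (φ : P → ℝ) :
    ∑ z ∈ W.lvl j, W.m z * coveredSum φ z = N * ∑ x ∈ W.lvl i, W.m x * φ x := by
  simp only [coveredSum, mul_sum]
  rw [← sum_lvl_sum_covBy_comm hij]
  refine sum_congr rfl fun x hx => ?_
  rw [← sum_mul, hstd.sum_covBy_m hl (by rw [mem_lvl.mp hx, hij]) hj, mul_assoc]

theorem Standard.mL_eq (hstd : W.Standard) (hl : W.LowerRegAt j N) (hz : W.rk z = j)
    (hxz : x ⋖ z) : W.mL x z = W.m z / (N * W.m x) := by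
  rw [mL_of_covBy hxz, hstd.p_eq hl hz hxz, div_mul_div_comm, mul_one, mul_comm (W.m x)]

theorem Standard.mul_innerL_zero (hstd : W.Standard) (hl : W.LowerRegAt j N)
    (hx : W.rk x + 1 = j) (f g : P → ℝ) :
    N * (W.m x * W.innerL x 0 f g) = ∑ z with x ⋖ z, W.m z * f z * g z := by
  rw [innerL_zero, mul_sum, mul_sum]
  refine sum_congr rfl fun z hz => ?_
  have hxz : x ⋖ z := (mem_filter.mp hz).2
  have hz : W.rk z = j := (W.rk_covBy x z hxz).trans hx
  have := hl.cast_ne_zero hz hxz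
  have := (W.m_pos x).ne'
  rw [hstd.mL_eq hl hz hxz]
  field_simp

theorem Standard.hatF_of_covBy (hstd : W.Standard) (hl : W.LowerRegAt j N) (hz : W.rk z = j)
    (hxz : x ⋖ z) (f : P → ℝ) : W.hatF x f z = (coveredSum f z - f x) / (N - 1) := by
  have hN := hl.cast_ne_zero hz hxz
  have hsum : ∑ y with y ≠ x ∧ y ⋖ z, W.p z y * f y = (coveredSum f z - f x) / N := by
    have herase : univ.filter (fun y => y ≠ x ∧ y ⋖ z) = (univ.filter (· ⋖ z)).erase x := by
      ext y; simp
    rw [herase, coveredSum, ← sum_erase_eq_sub (mem_filter.mpr ⟨mem_univ x, hxz⟩), sum_div]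
    refine sum_congr rfl fun y hy => ?_
    rw [hstd.p_eq hl hz (mem_filter.mp (mem_of_mem_erase hy)).2, one_div_mul_eq_div]
  rw [hatF, hsum, hstd.p_eq hl hz hxz, div_mul_div_comm, one_mul, sub_mul, one_mul,
    one_div_mul_cancel hN]

theorem Standard.mul_adj (hstd : W.Standard) (hl : W.LowerRegAt j N) (hN : N ≠ 1)
    (hx : W.rk x + 1 = j) (f : P → ℝ) :
    N * (N - 1) * (W.m x * W.Adj f x) = ∑ z with x ⋖ z, W.m z * (coveredSum f z - f x) := by
  have hN' : (N : ℝ) - 1 ≠ 0 := sub_ne_zero.mpr (Nat.cast_ne_one.mpr hN)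
  rw [mul_right_comm, adj_eq_innerL_hatF, hstd.mul_innerL_zero hl hx, sum_mul]
  refine sum_congr rfl fun z hz => ?_
  have hxz : x ⋖ z := (mem_filter.mp hz).2
  rw [hstd.hatF_of_covBy hl ((W.rk_covBy x z hxz).trans hx) hxz]
  field_simp

end StandardScheme

section Energy

variable {W} {i j : ℤ} {N : ℕ}

theorem Standard.sum_m_mul_coveredSum_sq (hstd : W.Standard) (hl : W.LowerRegAt j N)
    (hij : i + 1 = j) (hj : j ≤ W.d) (f : P → ℝ) :
    ∑ z ∈ W.lvl j, W.m z * coveredSum (f ^ 2) z = N * W.innerAt i f f := by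
  rw [hstd.sum_lvl_m_mul_coveredSum hl hij hj, innerAt]
  simp only [Pi.pow_apply, sq, mul_assoc]

theorem Standard.sum_m_mul_sq_coveredSum_sub (hstd : W.Standard) (hl : W.LowerRegAt j N)
    (hN : N ≠ 1) (hij : i + 1 = j) (f : P → ℝ) :
    ∑ z ∈ W.lvl j, W.m z * (coveredSum f z ^ 2 - coveredSum (f ^ 2) z)
      = N * (N - 1) * W.innerAt i (W.Adj f) f := by
  rw [innerAt, mul_sum]
  calc ∑ z ∈ W.lvl j, W.m z * (coveredSum f z ^ 2 - coveredSum (f ^ 2) z)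
    _ = ∑ z ∈ W.lvl j, ∑ x with x ⋖ z, W.m z * (coveredSum f z - f x) * f x := by
        refine sum_congr rfl fun z _ => ?_
        simp only [mul_assoc, ← mul_sum, coveredSum, sum_sum_sub_mul_self, Pi.pow_apply]
    _ = ∑ x ∈ W.lvl i, N * (N - 1) * (W.m x * W.Adj f x * f x) := by
        rw [← sum_lvl_sum_covBy_comm hij]
        refine sum_congr rfl fun x hx => ?_
        rw [← sum_mul, ← hstd.mul_adj hl hN (by rw [mem_lvl.mp hx, hij]), mul_assoc]

theorem Standard.sum_m_mul_innerL_hatF (hstd : W.Standard) (hl : W.LowerRegAt j N)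
    (hN : 2 ≤ N) (hij : i + 1 = j) (hj : j ≤ W.d) (f : P → ℝ) :
    ∑ x ∈ W.lvl i, W.m x * W.innerL x 0 (W.hatF x f) (W.hatF x f)
      = (W.innerAt i f f + (N - 2) * W.innerAt i (W.Adj f) f) / (N - 1) := by
  have hN0 : (N : ℝ) ≠ 0 := by positivity
  have hN1 : (N : ℝ) - 1 ≠ 0 := sub_ne_zero.mpr (by simp; lia)
  have hlocal : N * (N - 1) ^ 2 * ∑ x ∈ W.lvl i, W.m x * W.innerL x 0 (W.hatF x f) (W.hatF x f)
      = ∑ z ∈ W.lvl j, ∑ x with x ⋖ z, W.m z * (coveredSum f z - f x) ^ 2 := by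
    rw [← sum_lvl_sum_covBy_comm hij, mul_sum]
    refine sum_congr rfl fun x hx => ?_
    have hx : W.rk x + 1 = j := by rw [mem_lvl.mp hx, hij]
    rw [mul_right_comm, hstd.mul_innerL_zero hl hx, sum_mul]
    refine sum_congr rfl fun z hz => ?_
    have hxz : x ⋖ z := (mem_filter.mp hz).2
    rw [hstd.hatF_of_covBy hl ((W.rk_covBy x z hxz).trans hx) hxz]
    field_simp
  have hglobal : ∑ z ∈ W.lvl j, ∑ x with x ⋖ z, W.m z * (coveredSum f z - f x) ^ 2
      = (N - 2) * ∑ z ∈ W.lvl j, W.m z * (coveredSum f z ^ 2 - coveredSum (f ^ 2) z)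
        + (N - 1) * ∑ z ∈ W.lvl j, W.m z * coveredSum (f ^ 2) z := by
    simp only [mul_sum, ← sum_add_distrib]
    refine sum_congr rfl fun z hz => ?_
    rw [← mul_sum, coveredSum, sum_sum_sub_sq, hl z (mem_lvl.mp hz)]
    simp only [coveredSum, Pi.pow_apply]
    ring
  rw [hstd.sum_m_mul_sq_coveredSum_sub hl (by lia) hij,
    hstd.sum_m_mul_coveredSum_sq hl hij hj, ← hlocal] at hglobal
  rw [eq_div_iff hN1]
  refine mul_left_cancel₀ (mul_ne_zero hN0 hN1) ?_
  linear_combination hglobal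

theorem Standard.sum_m_mul_sum_sub_coveredSum_sq (hstd : W.Standard)
    (hl : W.LowerRegAt j N) (hN : N ≠ 1) (hij : i + 1 = j) (hj : j ≤ W.d) (f : P → ℝ) :
    ∑ z ∈ W.lvl j, ∑ x with x ⋖ z, W.m z * (N * f x - coveredSum f z) ^ 2
      = N ^ 2 * (N - 1) * (W.innerAt i f f - W.innerAt i (W.Adj f) f) := by
  have hvar : ∑ z ∈ W.lvl j, ∑ x with x ⋖ z, W.m z * (N * f x - coveredSum f z) ^ 2
      = N * (N - 1) * ∑ z ∈ W.lvl j, W.m z * coveredSum (f ^ 2) z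
        - N * ∑ z ∈ W.lvl j, W.m z * (coveredSum f z ^ 2 - coveredSum (f ^ 2) z) := by
    rw [mul_sum, mul_sum, ← sum_sub_distrib]
    refine sum_congr rfl fun z hz => ?_
    rw [← mul_sum, coveredSum, ← hl z (mem_lvl.mp hz), sum_card_mul_sub_sum_sq]
    simp only [coveredSum, Pi.pow_apply]
    ring
  rw [hvar, hstd.sum_m_mul_coveredSum_sq hl hij hj,
    hstd.sum_m_mul_sq_coveredSum_sub hl hN hij]
  ring

end Energy

/-- `P` is `2`-skeleton regular with constants `N₁ = N^low_1`, `N₂ = N^low_2`, `M = N^mid_1`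
and `R`. -/
structure TwoSkeletonRegular (N₁ N₂ M R : ℕ) : Prop where
  lower_one : W.LowerRegAt 1 N₁
  lower_two : W.LowerRegAt 2 N₂
  middle_one : W.MiddleRegAt 1 M
  wye : W.WyeReg R

section LinkOfAtom

variable {W} {N₁ N₂ M R : ℕ} {x z w u : P}

theorem mem_between : z ∈ between x u ↔ x ⋖ z ∧ z ⋖ u := by simp [between]

theorem chSum_of_rk_eq_add_two (h : W.rk u = W.rk x + 2) :
    W.chSum x u = ∑ z ∈ between x u, W.p u z * W.p z x := by
  rw [between, sum_filter_of_ne]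
  · simp [chSum, h, upMat, pow_two, Matrix.mul_apply]
  · exact fun z _ hz => ⟨of_not_not fun hxz => hz (by rw [p_eq_zero hxz, mul_zero]),
      of_not_not fun hzu => hz (by rw [p_eq_zero hzu, zero_mul])⟩

theorem MiddleRegAt.card_between (hmid : W.MiddleRegAt 1 M) (hx : W.rk x = 0)
    (hu : W.rk u = 2) (hxu : x < u) : #(between x u) = M :=
  hmid u x (by rw [hu]; rfl) (by rw [hx]; rfl) hxu

theorem TwoSkeletonRegular.chSum_eq (h : W.TwoSkeletonRegular N₁ N₂ M R)
    (hstd : W.Standard) (hx : W.rk x = 0) (hu : W.rk u = 2) (hxu : x < u) :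
    W.chSum x u = M / (N₁ * N₂) := by
  rw [chSum_of_rk_eq_add_two (by rw [hx, hu]; rfl)]
  have hterm : ∀ z ∈ between x u, W.p u z * W.p z x = 1 / (N₁ * N₂) := fun z hz => by
    obtain ⟨hxz, hzu⟩ := mem_between.mp hz
    have hrk : W.rk z = 1 := by rw [W.rk_covBy x z hxz, hx]; rfl
    rw [hstd.p_eq h.lower_two hu hzu, hstd.p_eq h.lower_one hrk hxz, one_div_mul_one_div,
      mul_comm]
  rw [sum_congr rfl hterm, sum_const, h.middle_one.card_between hx hu hxu, nsmul_eq_mul,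
    mul_one_div]

theorem pL_eq_zero_of_not_covBy (hw : W.rk w = W.rk x + 1) (hxw : ¬x ⋖ w) :
    W.pL x u w = 0 := by
  rw [pL, chSum_of_rk_eq_add_one hw, p_eq_zero hxw, mul_zero, zero_div]

theorem TwoSkeletonRegular.pL_eq (h : W.TwoSkeletonRegular N₁ N₂ M R) (hstd : W.Standard)
    (hx : W.rk x = 0) (hxw : x ⋖ w) (hwu : w ⋖ u) : W.pL x u w = 1 / M := by
  have hw : W.rk w = 1 := by rw [W.rk_covBy x w hxw, hx]; rfl
  have hu : W.rk u = 2 := by rw [W.rk_covBy w u hwu, hw]; rfl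
  have hN₁ := h.lower_one.cast_ne_zero hw hxw
  have hN₂ := h.lower_two.cast_ne_zero hu hwu
  rw [pL, chSum_of_rk_eq_add_one (W.rk_covBy x w hxw), h.chSum_eq hstd hx hu (hxw.lt.trans hwu.lt),
    hstd.p_eq h.lower_one hw hxw, hstd.p_eq h.lower_two hu hwu]
  field_simp

theorem TwoSkeletonRegular.sum_pL_mul (h : W.TwoSkeletonRegular N₁ N₂ M R)
    (hstd : W.Standard) (hx : W.rk x = 0) (hxz : x ⋖ z) (hzu : z ⋖ u) (g : P → ℝ) :
    ∑ w with w ≠ z ∧ w ⋖ u, W.pL x u w * g w = (∑ w ∈ between x u, g w - g z) / M := by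
  rw [← sum_erase_eq_sub (mem_between.mpr ⟨hxz, hzu⟩), sum_div]
  symm
  refine sum_subset_zero_on_sdiff (fun w hw => ?_) (fun w hw => ?_) fun w hw => ?_
  · simp only [mem_erase, mem_between] at hw
    simp [hw.1, hw.2.2]
  · simp only [mem_sdiff, mem_filter, mem_univ, true_and, mem_erase, mem_between,
      not_and] at hw
    have hrk : W.rk w = W.rk x + 1 := by
      linarith [W.rk_covBy w u hw.1.2, W.rk_covBy z u hzu, W.rk_covBy x z hxz]
    rw [pL_eq_zero_of_not_covBy hrk fun hxw => hw.2 hw.1.1 hxw hw.1.2, zero_mul]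
  · obtain ⟨hxw, hwu⟩ := mem_between.mp (mem_of_mem_erase hw)
    rw [h.pL_eq hstd hx hxw hwu, one_div_mul_eq_div]

theorem adjMatL_eq_zero_of_not_covBy (hxz : x ⋖ z) (hxw : ¬x ⋖ w) : W.adjMatL x z w = 0 := by
  rw [adjMatL, Matrix.of_apply, ite_eq_left_iff]
  refine fun _ => sum_eq_zero fun u hu => ?_
  obtain ⟨hwu, hzu⟩ := (mem_filter.mp hu).2
  have hw : W.rk w = W.rk x + 1 := by
    linarith [W.rk_covBy w u hwu, W.rk_covBy z u hzu, W.rk_covBy x z hxz]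
  rw [pL_eq_zero_of_not_covBy hw hxw, mul_zero, zero_mul, zero_div]

theorem TwoSkeletonRegular.mL_mul_adjMatL_comm (h : W.TwoSkeletonRegular N₁ N₂ M R)
    (hstd : W.Standard) (hx : W.rk x = 0) (hxz : x ⋖ z) (hxw : x ⋖ w) :
    W.mL x z * W.adjMatL x z w = W.mL x w * W.adjMatL x w z := by
  have hentry : ∀ {z w}, x ⋖ z → x ⋖ w → W.mL x z * W.adjMatL x z w =
      if w = z then 0 else
        ∑ u with w ⋖ u ∧ z ⋖ u, W.mL x u * (1 / M) * (1 / M) / (1 - 1 / M) := fun {z w} hz hw => by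
    rw [adjMatL, Matrix.of_apply, mul_ite, mul_zero, mul_sum]
    congr 1
    refine sum_congr rfl fun u hu => ?_
    obtain ⟨hwu, hzu⟩ := (mem_filter.mp hu).2
    rw [h.pL_eq hstd hx hw hwu, h.pL_eq hstd hx hz hzu, ← mul_div_assoc, mul_comm (W.mL x z),
      mul_div_mul_right _ _ (mL_pos_of_covBy hz).ne']
  rw [hentry hxz hxw, hentry hxw hxz]
  simp only [and_comm, eq_comm]

theorem TwoSkeletonRegular.mul_adjL (h : W.TwoSkeletonRegular N₁ N₂ M R) (hstd : W.Standard)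
    (hM : M ≠ 1) (hx : W.rk x = 0) (hxz : x ⋖ z) (g : P → ℝ) :
    N₂ * (M - 1) * (W.m z * W.AdjL x g z)
      = ∑ u with z ⋖ u, W.m u * (∑ w ∈ between x u, g w - g z) := by
  have hM' : (M : ℝ) - 1 ≠ 0 := sub_ne_zero.mpr (Nat.cast_ne_one.mpr hM)
  have hz : W.rk z = 1 := by rw [W.rk_covBy x z hxz, hx]; rfl
  rw [adjL_eq_sum_covBy, mul_sum, mul_sum]
  refine sum_congr rfl fun u hu => ?_
  have hzu : z ⋖ u := (mem_filter.mp hu).2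
  have hu : W.rk u = 2 := by rw [W.rk_covBy z u hzu, hz]; rfl
  have hxu : x < u := hxz.lt.trans hzu.lt
  have hN₁ := h.lower_one.cast_ne_zero hz hxz
  have hN₂ := h.lower_two.cast_ne_zero hu hzu
  have hM₀ : (M : ℝ) ≠ 0 := by
    rw [← h.middle_one.card_between hx hu hxu]
    exact_mod_cast card_ne_zero_of_mem (mem_between.mpr ⟨hxz, hzu⟩)
  have hmx := (W.m_pos x).ne'
  have hmz := (W.m_pos z).ne'
  rw [h.sum_pL_mul hstd hx hxz hzu, h.pL_eq hstd hx hxz hzu, hstd.mL_eq h.lower_one hz hxz, mL,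
    h.chSum_eq hstd hx hu hxu, one_sub_div hM₀]
  field_simp

theorem TwoSkeletonRegular.adjL_one (h : W.TwoSkeletonRegular N₁ N₂ M R)
    (hstd : W.Standard) (hd : 2 ≤ W.d) (hM : M ≠ 1) (hx : W.rk x = 0) (hxz : x ⋖ z) :
    W.AdjL x (fun _ => 1) z = 1 := by
  have hM' : (M : ℝ) - 1 ≠ 0 := sub_ne_zero.mpr (Nat.cast_ne_one.mpr hM)
  have hz : W.rk z = 1 := by rw [W.rk_covBy x z hxz, hx]; rfl
  obtain ⟨u, hzu⟩ := exists_covBy_of_rk_lt (W := W) (x := z) (by lia)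
  have hN₂ := h.lower_two.cast_ne_zero (by rw [W.rk_covBy z u hzu, hz]; rfl) hzu
  refine mul_left_cancel₀ (mul_ne_zero (mul_ne_zero hN₂ hM') (W.m_pos z).ne') ?_
  have hsum := h.mul_adjL hstd hM hx hxz fun _ => 1
  have hterm : ∀ u ∈ univ.filter (z ⋖ ·), W.m u * (∑ _w ∈ between x u, (1 : ℝ) - 1)
      = (M - 1) * W.m u := fun u hu => by
    have hzu : z ⋖ u := (mem_filter.mp hu).2
    rw [sum_const, nsmul_one, h.middle_one.card_between hx
      (by rw [W.rk_covBy z u hzu, hz]; rfl) (hxz.lt.trans hzu.lt), mul_comm]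
  rw [sum_congr rfl hterm, ← mul_sum,
    hstd.sum_covBy_m h.lower_two (by rw [hz]; rfl) hd] at hsum
  linear_combination hsum

theorem TwoSkeletonRegular.mul_innerL_adjL (h : W.TwoSkeletonRegular N₁ N₂ M R)
    (hstd : W.Standard) (hM : M ≠ 1) (hx : W.rk x = 0) (g : P → ℝ) :
    N₁ * N₂ * (M - 1) * (W.m x * W.innerL x 0 (W.AdjL x g) g)
      = ∑ u ∈ W.lvl 2, W.m u * ((∑ z ∈ between x u, g z) ^ 2 - ∑ z ∈ between x u, g z ^ 2) := by
  have hx1 : W.rk x + 1 = 1 := by rw [hx]; rfl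
  calc N₁ * N₂ * (M - 1) * (W.m x * W.innerL x 0 (W.AdjL x g) g)
    _ = N₂ * (M - 1) * (N₁ * (W.m x * W.innerL x 0 (W.AdjL x g) g)) := by ring
    _ = ∑ z with x ⋖ z, ∑ u with z ⋖ u, W.m u * (∑ w ∈ between x u, g w - g z) * g z := by
        rw [hstd.mul_innerL_zero h.lower_one hx1, mul_sum]
        refine sum_congr rfl fun z hz => ?_
        rw [← sum_mul, ← h.mul_adjL hstd hM hx (mem_filter.mp hz).2]
        ring
    _ = ∑ u ∈ W.lvl 2, ∑ z ∈ between x u, W.m u * (∑ w ∈ between x u, g w - g z) * g z := by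
        refine sum_comm' fun z u => ?_
        simp only [mem_filter, mem_univ, true_and, mem_lvl, mem_between]
        refine ⟨fun hzu => ⟨hzu, ?_⟩, fun hzu => hzu.1⟩
        rw [W.rk_covBy z u hzu.2, W.rk_covBy x z hzu.1, hx]
        rfl
    _ = _ := sum_congr rfl fun u _ => by simp only [mul_assoc, ← mul_sum, sum_sum_sub_mul_self]

end LinkOfAtom

section LinkSpectrum

open scoped Matrix

/-- The adjacency matrix of the link of `x`, cut down to the atoms of the link. -/
def atomAdjMatL (x : P) : Matrix {z // x ⋖ z} {z // x ⋖ z} ℝ :=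
  (W.adjMatL x).submatrix Subtype.val Subtype.val

variable {W} {N₁ N₂ M R : ℕ} {x : P}

theorem innerL_zero_eq_sum_subtype (f g : P → ℝ) :
    W.innerL x 0 f g = ∑ z : {z // x ⋖ z}, W.mL x z * f z * g z := by
  rw [innerL_zero]
  exact sum_subtype (p := (x ⋖ ·)) _ (by simp) fun z => W.mL x z * f z * g z

theorem atomAdjMatL_mulVec (g : P → ℝ) (z : {z // x ⋖ z}) :
    (W.atomAdjMatL x *ᵥ fun w => g w) z = W.AdjL x g z := by
  have hsum : ∑ w with x ⋖ w, W.adjMatL x z w * g w = ∑ w, W.adjMatL x z w * g w :=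
    sum_filter_of_ne fun w _ hw => of_not_not fun hxw =>
      hw (by rw [adjMatL_eq_zero_of_not_covBy z.2 hxw, zero_mul])
  rw [AdjL, Matrix.mulVec, Matrix.mulVec, dotProduct, dotProduct, ← hsum]
  exact (sum_subtype (p := (x ⋖ ·)) _ (by simp) fun w => W.adjMatL x z w * g w).symm

theorem isNontrivEigAdjL_of_atomAdjMatL {c : ℝ} {v : {z // x ⋖ z} → ℝ} (hv : v ≠ 0)
    (hAv : W.atomAdjMatL x *ᵥ v = c • v)
    (hmean : ∑ z : {z // x ⋖ z}, W.mL x z * v z = 0) :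
    W.IsNontrivEigAdjL x c := by
  obtain ⟨f, hf⟩ : ∃ f : P → ℝ, v = fun z : {z // x ⋖ z} => f z :=
    ⟨Function.extend Subtype.val v 0,
      funext fun z => (Subtype.val_injective.extend_apply v 0 z).symm⟩
  subst hf
  obtain ⟨z, hz⟩ := Function.ne_iff.mp hv
  refine ⟨f, ⟨z, z.2, hz⟩, fun y hy => ?_, ?_⟩
  · rw [← atomAdjMatL_mulVec f ⟨y, hy⟩, hAv]
    rfl
  · simpa only [innerL_zero_eq_sum_subtype, mul_one] using hmean

theorem sum_subtype_mL (hx : W.rk x < W.d) : ∑ z : {z // x ⋖ z}, W.mL x z = 1 := by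
  simpa only [innerL_zero_eq_sum_subtype, mul_one] using innerL_zero_one_one hx

theorem TwoSkeletonRegular.atomAdjMatL_mulVec_one (h : W.TwoSkeletonRegular N₁ N₂ M R)
    (hstd : W.Standard) (hd : 2 ≤ W.d) (hM : M ≠ 1) (hx : W.rk x = 0) :
    W.atomAdjMatL x *ᵥ 1 = (1 : ℝ) • 1 := by
  ext z
  rw [one_smul]
  exact (atomAdjMatL_mulVec (fun _ => 1) z).trans (h.adjL_one hstd hd hM hx z.2)

theorem TwoSkeletonRegular.innerL_adjL_le (h : W.TwoSkeletonRegular N₁ N₂ M R)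
    (hstd : W.Standard) (hd : 2 ≤ W.d) (hM : M ≠ 1) (hx : W.rk x = 0) {μ : ℝ}
    (heig : ∀ c, W.IsNontrivEigAdjL x c → c ≤ μ) (g : P → ℝ) :
    W.innerL x 0 (W.AdjL x g) g
      ≤ μ * W.innerL x 0 g g + (1 - μ) * W.innerL x 0 g (fun _ => 1) ^ 2 := by
  have hform := quadraticForm_le_of_nontrivial_eigenvalues_le (A := W.atomAdjMatL x) (t := μ)
    (fun z : {z // x ⋖ z} => mL_pos_of_covBy z.2) (sum_subtype_mL (by lia))
    (fun z w : {z // x ⋖ z} => h.mL_mul_adjMatL_comm hstd hx z.2 w.2)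
    (h.atomAdjMatL_mulVec_one hstd hd hM hx)
    (fun c v hv hAv hmean => heig c (isNontrivEigAdjL_of_atomAdjMatL hv hAv hmean))
    fun z => g z
  simpa only [innerL_zero_eq_sum_subtype, mul_one, mul_assoc, ← sq,
    atomAdjMatL_mulVec] using hform

theorem TwoSkeletonRegular.le_innerL_adjL (h : W.TwoSkeletonRegular N₁ N₂ M R)
    (hstd : W.Standard) (hd : 2 ≤ W.d) (hM : M ≠ 1) (hx : W.rk x = 0) {ν : ℝ}
    (heig : ∀ c, W.IsNontrivEigAdjL x c → ν ≤ c) (g : P → ℝ) :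
    ν * W.innerL x 0 g g + (1 - ν) * W.innerL x 0 g (fun _ => 1) ^ 2
      ≤ W.innerL x 0 (W.AdjL x g) g := by
  have hform := le_quadraticForm_of_le_nontrivial_eigenvalues (A := W.atomAdjMatL x) (t := ν)
    (fun z : {z // x ⋖ z} => mL_pos_of_covBy z.2) (sum_subtype_mL (by lia))
    (fun z w : {z // x ⋖ z} => h.mL_mul_adjMatL_comm hstd hx z.2 w.2)
    (h.atomAdjMatL_mulVec_one hstd hd hM hx)
    (fun c v hv hAv hmean => heig c (isNontrivEigAdjL_of_atomAdjMatL hv hAv hmean))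
    fun z => g z
  simpa only [innerL_zero_eq_sum_subtype, mul_one, mul_assoc, ← sq,
    atomAdjMatL_mulVec] using hform

end LinkSpectrum

section RankTwoElement

/-- The elements of `P(0)` below `u`. -/
def atomsBelow (u : P) : Finset P := {x ∈ W.lvl 0 | x < u}

variable {W} {N₁ N₂ M R : ℕ} {x u : P}

theorem mem_atomsBelow : x ∈ W.atomsBelow u ↔ W.rk x = 0 ∧ x < u := by
  rw [atomsBelow, mem_filter, mem_lvl]

theorem sum_coveredBy_sum_comm (hu : W.rk u = 2) (φ : P → P → ℝ) :
    ∑ z with z ⋖ u, ∑ x with x ⋖ z, φ x z = ∑ x ∈ W.atomsBelow u, ∑ z ∈ between x u, φ x z := by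
  refine sum_comm' fun z x => ?_
  simp only [mem_filter, mem_univ, true_and, mem_atomsBelow, mem_between]
  exact ⟨fun ⟨hzu, hxz⟩ => ⟨⟨hxz, hzu⟩,
      by linarith [W.rk_covBy z u hzu, W.rk_covBy x z hxz], hxz.lt.trans hzu.lt⟩,
    fun h => ⟨h.1.2, h.1.1⟩⟩

theorem WyeReg.sum_between_coveredSum_sub (hwye : W.WyeReg R) (hu : W.rk u = 2)
    (hx : x ∈ W.atomsBelow u) (f : P → ℝ) :
    ∑ z ∈ between x u, (coveredSum f z - f x) = R * (∑ y ∈ W.atomsBelow u, f y - f x) := by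
  obtain ⟨hx0, hxu⟩ := mem_atomsBelow.mp hx
  calc ∑ z ∈ between x u, (coveredSum f z - f x)
    _ = ∑ z ∈ between x u, ∑ y ∈ (univ.filter (· ⋖ z)).erase x, f y := by
        refine sum_congr rfl fun z hz => ?_
        rw [coveredSum, sum_erase_eq_sub (by simpa using (mem_between.mp hz).1)]
    _ = ∑ y ∈ (W.atomsBelow u).erase x, ∑ z with x ⋖ z ∧ y ⋖ z ∧ z ⋖ u, f y := by
        refine sum_comm' fun z y => ?_
        simp only [mem_between, mem_erase, mem_filter, mem_univ, true_and, mem_atomsBelow]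
        refine ⟨fun ⟨⟨hxz, hzu⟩, hyx, hyz⟩ =>
          ⟨⟨hxz, hyz, hzu⟩, hyx, ?_, hyz.lt.trans hzu.lt⟩,
          fun ⟨⟨hxz, hyz, hzu⟩, hyx, _⟩ => ⟨⟨hxz, hzu⟩, hyx, hyz⟩⟩
        linarith [W.rk_covBy x z hxz, W.rk_covBy y z hyz]
    _ = ∑ y ∈ (W.atomsBelow u).erase x, R * f y := by
        refine sum_congr rfl fun y hy => ?_
        obtain ⟨hyx, hy⟩ := mem_erase.mp hy
        obtain ⟨hy0, hyu⟩ := mem_atomsBelow.mp hy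
        rw [sum_const, hwye u x y hu hx0 hy0 hyx.symm hxu hyu, nsmul_eq_mul]
    _ = _ := by rw [← mul_sum, sum_erase_eq_sub hx]

theorem MiddleRegAt.mul_sum_atomsBelow (hmid : W.MiddleRegAt 1 M) (hu : W.rk u = 2)
    (f : P → ℝ) : M * ∑ x ∈ W.atomsBelow u, f x = coveredSum (coveredSum f) u := by
  simp only [coveredSum]
  rw [sum_coveredBy_sum_comm hu, mul_sum]
  refine sum_congr rfl fun x hx => ?_
  obtain ⟨hx0, hxu⟩ := mem_atomsBelow.mp hx
  rw [sum_const, hmid.card_between hx0 hu hxu, nsmul_eq_mul]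

theorem WyeReg.mul_sq_sum_atomsBelow_sub (hwye : W.WyeReg R) (hu : W.rk u = 2) (f : P → ℝ) :
    R * ((∑ x ∈ W.atomsBelow u, f x) ^ 2 - ∑ x ∈ W.atomsBelow u, f x ^ 2)
      = coveredSum (coveredSum f ^ 2 - coveredSum (f ^ 2)) u := by
  calc R * ((∑ x ∈ W.atomsBelow u, f x) ^ 2 - ∑ x ∈ W.atomsBelow u, f x ^ 2)
    _ = ∑ x ∈ W.atomsBelow u, ∑ z ∈ between x u, (coveredSum f z - f x) * f x := by
        rw [← sum_sum_sub_mul_self, mul_sum]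
        refine sum_congr rfl fun x hx => ?_
        rw [← sum_mul, hwye.sum_between_coveredSum_sub hu hx, mul_assoc]
    _ = _ := by
        rw [← sum_coveredBy_sum_comm hu, coveredSum]
        refine sum_congr rfl fun z _ => ?_
        simp only [coveredSum, sum_sum_sub_mul_self, Pi.sub_apply, Pi.pow_apply]

theorem TwoSkeletonRegular.mul_card_atomsBelow_sub_one (h : W.TwoSkeletonRegular N₁ N₂ M R)
    (hu : W.rk u = 2) (hx : x ∈ W.atomsBelow u) :
    (R : ℝ) * (#(W.atomsBelow u) - 1) = M * (N₁ - 1) := by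
  obtain ⟨hx0, hxu⟩ := mem_atomsBelow.mp hx
  have hsum := h.wye.sum_between_coveredSum_sub hu hx fun _ => 1
  have hterm : ∀ z ∈ between x u, coveredSum (fun _ => 1) z - 1 = (N₁ : ℝ) - 1 := fun z hz => by
    have hz1 : W.rk z = 1 := by rw [W.rk_covBy x z (mem_between.mp hz).1, hx0]; rfl
    rw [coveredSum, sum_const, h.lower_one z hz1, nsmul_one]
  rw [sum_congr rfl hterm, sum_const, h.middle_one.card_between hx0 hu hxu] at hsum
  simpa using hsum.symm

theorem TwoSkeletonRegular.mul_card_atomsBelow (h : W.TwoSkeletonRegular N₁ N₂ M R)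
    (hu : W.rk u = 2) : (M : ℝ) * #(W.atomsBelow u) = N₁ * N₂ := by
  have hsum := h.middle_one.mul_sum_atomsBelow hu fun _ => 1
  have hterm : ∀ z ∈ univ.filter (· ⋖ u), coveredSum (fun _ => 1) z = (N₁ : ℝ) := fun z hz => by
    rw [coveredSum, sum_const, h.lower_one z
      (by linarith [W.rk_covBy z u (mem_filter.mp hz).2]), nsmul_one]
  rw [coveredSum, sum_congr rfl hterm, sum_const, sum_const, h.lower_two u hu] at hsum
  simpa [mul_comm] using hsum

theorem TwoSkeletonRegular.sum_atomsBelow_sq_sum_between_sub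
    (h : W.TwoSkeletonRegular N₁ N₂ M R) (hu : W.rk u = 2) (f : P → ℝ) :
    ∑ x ∈ W.atomsBelow u, ((∑ z ∈ between x u, (coveredSum f z - f x)) ^ 2
        - ∑ z ∈ between x u, (coveredSum f z - f x) ^ 2)
      = ((M - 1) * (N₁ - 1) - (R - 1)) * coveredSum (coveredSum f ^ 2 - coveredSum (f ^ 2)) u
        + (R - 1) * (N₁ - 1) * coveredSum (coveredSum (f ^ 2)) u := by
  obtain hempty | ⟨x, hx⟩ := (W.atomsBelow u).eq_empty_or_nonempty
  · rw [← h.wye.mul_sq_sum_atomsBelow_sub hu f, ← h.middle_one.mul_sum_atomsBelow hu, hempty]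
    simp
  have hcard := h.mul_card_atomsBelow_sub_one hu hx
  have hdiag : ∑ x ∈ W.atomsBelow u, ∑ z ∈ between x u, (coveredSum f z - f x) ^ 2
      = (N₁ - 2) * coveredSum (coveredSum f ^ 2 - coveredSum (f ^ 2)) u
        + (N₁ - 1) * coveredSum (coveredSum (f ^ 2)) u := by
    rw [← sum_coveredBy_sum_comm hu, coveredSum, coveredSum, mul_sum, mul_sum, ← sum_add_distrib]
    refine sum_congr rfl fun z hz => ?_
    rw [coveredSum, sum_sum_sub_sq,
      h.lower_one z (by linarith [W.rk_covBy z u (mem_filter.mp hz).2])]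
    simp only [coveredSum, Pi.sub_apply, Pi.pow_apply]
    ring
  have hsq : ∑ x ∈ W.atomsBelow u, (∑ z ∈ between x u, (coveredSum f z - f x)) ^ 2
      = R ^ 2 * ((#(W.atomsBelow u) - 2) * (∑ x ∈ W.atomsBelow u, f x) ^ 2
        + ∑ x ∈ W.atomsBelow u, f x ^ 2) := by
    rw [← sum_sum_sub_sq, mul_sum]
    refine sum_congr rfl fun x hx => ?_
    rw [h.wye.sum_between_coveredSum_sub hu hx, mul_pow]
  have hoff := h.wye.mul_sq_sum_atomsBelow_sub hu f
  have hmid := h.middle_one.mul_sum_atomsBelow hu (f ^ 2)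
  simp only [Pi.pow_apply] at hmid
  rw [sum_sub_distrib, hsq, hdiag, ← hoff, ← hmid]
  linear_combination hcard *
    (R * (∑ x ∈ W.atomsBelow u, f x) ^ 2)

end RankTwoElement

section TricklingDown

variable {W} {N₁ N₂ M R : ℕ}

theorem exists_rk_eq {i : ℤ} (h : -1 ≤ i) : i ≤ W.d → ∃ x, W.rk x = i := by
  induction i, h using Int.leInduction with
  | base => exact fun _ => W.bot_unique.exists
  | succ i _ ih =>
    intro hi
    obtain ⟨x, hx⟩ := ih (by lia)
    obtain ⟨z, hxz⟩ := exists_covBy_of_rk_lt (W := W) (x := x) (by lia)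
    exact ⟨z, by rw [W.rk_covBy x z hxz, hx]⟩

theorem LowerRegAt.cast_ne_zero_of_nonneg {j : ℤ} {N : ℕ} (hl : W.LowerRegAt j N) (hj : 0 ≤ j)
    (hjd : j ≤ W.d) : (N : ℝ) ≠ 0 := by
  obtain ⟨x, hx⟩ := exists_rk_eq (W := W) (i := j - 1) (by lia) (by lia)
  obtain ⟨z, hxz⟩ := exists_covBy_of_rk_lt (W := W) (x := x) (by lia)
  exact hl.cast_ne_zero (by rw [W.rk_covBy x z hxz, hx]; ring) hxz

theorem TwoSkeletonRegular.mul_sum_m_mul_innerL_adjL_hatF (h : W.TwoSkeletonRegular N₁ N₂ M R)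
    (hstd : W.Standard) (hN₁ : N₁ ≠ 1) (hM : M ≠ 1) (f : P → ℝ) :
    N₁ * N₂ * (M - 1) * (N₁ - 1) ^ 2 *
        ∑ x ∈ W.lvl 0, W.m x * W.innerL x 0 (W.AdjL x (W.hatF x f)) (W.hatF x f)
      = ∑ u ∈ W.lvl 2, W.m u * ∑ x ∈ W.atomsBelow u,
          ((∑ z ∈ between x u, (coveredSum f z - f x)) ^ 2
            - ∑ z ∈ between x u, (coveredSum f z - f x) ^ 2) := by
  have hN₁' : (N₁ : ℝ) - 1 ≠ 0 := sub_ne_zero.mpr (Nat.cast_ne_one.mpr hN₁)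
  have hlink : ∀ x ∈ W.lvl 0, ∀ u, ∀ z ∈ between x u,
      coveredSum f z - f x = (N₁ - 1) * W.hatF x f z := fun x hx u z hz => by
    have hxz := (mem_between.mp hz).1
    rw [hstd.hatF_of_covBy h.lower_one (by rw [W.rk_covBy x z hxz, mem_lvl.mp hx]; rfl) hxz,
      mul_div_cancel₀ _ hN₁']
  have hbelow : ∀ u, ∀ x ∈ W.lvl 0, x ∉ W.atomsBelow u → between x u = ∅ := fun u x hx hxu => by
    refine eq_empty_of_forall_notMem fun z hz => hxu ?_
    obtain ⟨hxz, hzu⟩ := mem_between.mp hz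
    exact mem_atomsBelow.mpr ⟨mem_lvl.mp hx, hxz.lt.trans hzu.lt⟩
  calc _ = ∑ x ∈ W.lvl 0, ∑ u ∈ W.lvl 2, W.m u *
          ((∑ z ∈ between x u, (coveredSum f z - f x)) ^ 2
            - ∑ z ∈ between x u, (coveredSum f z - f x) ^ 2) := by
        rw [mul_sum]
        refine sum_congr rfl fun x hx => ?_
        rw [mul_right_comm, h.mul_innerL_adjL hstd hM (mem_lvl.mp hx), sum_mul]
        refine sum_congr rfl fun u _ => ?_
        rw [sum_congr rfl (hlink x hx u),
          sum_congr rfl fun z hz => congrArg (· ^ 2) (hlink x hx u z hz)]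
        simp only [mul_pow, ← mul_sum]
        ring
    _ = _ := by
        rw [sum_comm]
        refine sum_congr rfl fun u _ => ?_
        rw [mul_sum]
        refine (sum_subset (filter_subset _ _) fun x hx hxu => ?_).symm
        rw [hbelow u x hx hxu]
        simp

theorem TwoSkeletonRegular.sum_m_mul_innerL_adjL_hatF (h : W.TwoSkeletonRegular N₁ N₂ M R)
    (hstd : W.Standard) (hd : 2 ≤ W.d) (hN₁ : N₁ ≠ 1) (hM : M ≠ 1) (f : P → ℝ) :
    ∑ x ∈ W.lvl 0, W.m x * W.innerL x 0 (W.AdjL x (W.hatF x f)) (W.hatF x f)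
      = W.innerAt 0 (W.Adj f) f + (R - 1) / ((M - 1) * (N₁ - 1)) *
          (W.innerAt 0 f f - W.innerAt 0 (W.Adj f) f) := by
  have hN₁' : (N₁ : ℝ) - 1 ≠ 0 := sub_ne_zero.mpr (Nat.cast_ne_one.mpr hN₁)
  have hM' : (M : ℝ) - 1 ≠ 0 := sub_ne_zero.mpr (Nat.cast_ne_one.mpr hM)
  have hN₁0 := h.lower_one.cast_ne_zero_of_nonneg zero_le_one (by lia)
  have hN₂0 := h.lower_two.cast_ne_zero_of_nonneg zero_le_two hd
  have htransfer : ∀ φ : P → ℝ,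
      ∑ u ∈ W.lvl 2, W.m u * coveredSum φ u = N₂ * ∑ z ∈ W.lvl 1, W.m z * φ z :=
    hstd.sum_lvl_m_mul_coveredSum h.lower_two rfl hd
  have hkey := (h.mul_sum_m_mul_innerL_adjL_hatF hstd hN₁ hM f).trans <|
    sum_congr rfl fun u hu =>
      congrArg (W.m u * ·) (h.sum_atomsBelow_sq_sum_between_sub (mem_lvl.mp hu) f)
  simp only [mul_add, mul_left_comm (W.m _), sum_add_distrib, ← mul_sum, htransfer, Pi.sub_apply,
    Pi.pow_apply] at hkey
  rw [hstd.sum_m_mul_sq_coveredSum_sub h.lower_one hN₁ (zero_add 1),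
    hstd.sum_m_mul_coveredSum_sq h.lower_one (zero_add 1) (by lia)] at hkey
  refine mul_left_cancel₀ (mul_ne_zero (mul_ne_zero (mul_ne_zero hN₁0 hN₂0) hM')
    (pow_ne_zero 2 hN₁')) (hkey.trans ?_)
  field_simp
  ring

theorem TwoSkeletonRegular.innerAt_adj_add_le (h : W.TwoSkeletonRegular N₁ N₂ M R)
    (hstd : W.Standard) (hd : 2 ≤ W.d) (hN₁ : 2 ≤ N₁) (hM : M ≠ 1) {μ : ℝ}
    (heig : ∀ x, W.rk x = 0 → ∀ c, W.IsNontrivEigAdjL x c → c ≤ μ) (f : P → ℝ) :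
    W.innerAt 0 (W.Adj f) f + (R - 1) / ((M - 1) * (N₁ - 1)) *
        (W.innerAt 0 f f - W.innerAt 0 (W.Adj f) f)
      ≤ μ * ((W.innerAt 0 f f + (N₁ - 2) * W.innerAt 0 (W.Adj f) f) / (N₁ - 1))
        + (1 - μ) * W.innerAt 0 (W.Adj f) (W.Adj f) := by
  rw [← h.sum_m_mul_innerL_adjL_hatF hstd hd (by lia) hM,
    ← hstd.sum_m_mul_innerL_hatF h.lower_one hN₁ (zero_add 1) (by lia), innerAt, mul_sum, mul_sum,
    ← sum_add_distrib]
  refine sum_le_sum fun x hx => ?_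
  have hlocal := mul_le_mul_of_nonneg_left
    (h.innerL_adjL_le hstd hd hM (mem_lvl.mp hx) (heig x (mem_lvl.mp hx)) (W.hatF x f))
    (W.m_pos x).le
  rw [← adj_eq_innerL_hatF] at hlocal
  linarith

theorem TwoSkeletonRegular.le_innerAt_adj_add (h : W.TwoSkeletonRegular N₁ N₂ M R)
    (hstd : W.Standard) (hd : 2 ≤ W.d) (hN₁ : 2 ≤ N₁) (hM : M ≠ 1) {ν : ℝ}
    (heig : ∀ x, W.rk x = 0 → ∀ c, W.IsNontrivEigAdjL x c → ν ≤ c) (f : P → ℝ) :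
    ν * ((W.innerAt 0 f f + (N₁ - 2) * W.innerAt 0 (W.Adj f) f) / (N₁ - 1))
        + (1 - ν) * W.innerAt 0 (W.Adj f) (W.Adj f)
      ≤ W.innerAt 0 (W.Adj f) f + (R - 1) / ((M - 1) * (N₁ - 1)) *
        (W.innerAt 0 f f - W.innerAt 0 (W.Adj f) f) := by
  rw [← h.sum_m_mul_innerL_adjL_hatF hstd hd (by lia) hM,
    ← hstd.sum_m_mul_innerL_hatF h.lower_one hN₁ (zero_add 1) (by lia), innerAt, mul_sum, mul_sum,
    ← sum_add_distrib]
  refine sum_le_sum fun x hx => ?_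
  have hlocal := mul_le_mul_of_nonneg_left
    (h.le_innerL_adjL hstd hd hM (mem_lvl.mp hx) (heig x (mem_lvl.mp hx)) (W.hatF x f))
    (W.m_pos x).le
  rw [← adj_eq_innerL_hatF] at hlocal
  linarith

end TricklingDown

section Connectivity

theorem reflTransGen_of_pow_apply_ne_zero {ι A : Type*} [Fintype ι] [Semiring A]
    {K : Matrix ι ι A} {j : ℕ} {a b : ι} (h : (K ^ j) a b ≠ 0) :
    Relation.ReflTransGen (fun a b => K a b ≠ 0) a b := by
  induction j generalizing b with
  | zero =>
    obtain rfl : a = b := by_contra fun hab => h (by rw [pow_zero, Matrix.one_apply_ne hab])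
    exact .refl
  | succ j ih =>
    rw [pow_succ, Matrix.mul_apply] at h
    obtain ⟨c, -, hc⟩ := exists_ne_zero_of_sum_ne_zero h
    exact (ih (left_ne_zero_of_mul hc)).tail (right_ne_zero_of_mul hc)

variable {W} {a b : P}

theorem exists_covBy_covBy_of_downMat_mul_upMat_ne_zero
    (h : (W.downMat * W.upMat) a b ≠ 0) : ∃ z, a ⋖ z ∧ b ⋖ z := by
  rw [Matrix.mul_apply] at h
  obtain ⟨z, -, hz⟩ := exists_ne_zero_of_sum_ne_zero h
  refine ⟨z, of_not_not fun ha => hz ?_, of_not_not fun hb => hz ?_⟩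
  · simp [downMat, p_eq_zero ha]
  · simp [upMat, p_eq_zero hb]

theorem Connected.apply_eq (hconn : W.Connected) {α : Type*} {f : P → α}
    (hf : ∀ x y z, W.rk z = 1 → x ⋖ z → y ⋖ z → f x = f y) (ha : W.rk a = 0) (hb : W.rk b = 0) :
    f a = f b := by
  obtain ⟨j, -, hj⟩ := hconn b a hb ha
  have hpath := reflTransGen_of_pow_apply_ne_zero hj
  clear hb hj
  refine (?_ : W.rk b = 0 ∧ f a = f b).2
  induction hpath with
  | refl => exact ⟨ha, rfl⟩
  | tail _ hstep ih =>
    obtain ⟨z, hcz, hbz⟩ := exists_covBy_covBy_of_downMat_mul_upMat_ne_zero hstep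
    have hz : W.rk z = 1 := by rw [W.rk_covBy _ z hcz, ih.1]; rfl
    exact ⟨by linarith [W.rk_covBy _ z hbz], ih.2.trans (hf _ _ z hz hcz hbz)⟩

end Connectivity

section Eigenvalues

variable {W} {N₁ N₂ M R : ℕ} {i : ℤ} {f g h : P → ℝ} {a b : ℝ}

theorem innerAt_eq_mul (hg : ∀ x, W.rk x = i → g x = a * f x)
    (hh : ∀ x, W.rk x = i → h x = b * f x) :
    W.innerAt i g h = a * b * W.innerAt i f f := by
  rw [innerAt, innerAt, mul_sum]
  refine sum_congr rfl fun x hx => ?_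
  rw [hg x (mem_lvl.mp hx), hh x (mem_lvl.mp hx)]
  ring

theorem innerAt_self_pos (hf : ∃ x, W.rk x = i ∧ f x ≠ 0) : 0 < W.innerAt i f f := by
  obtain ⟨x, hx, hfx⟩ := hf
  simp only [innerAt, mul_assoc]
  exact sum_pos' (fun y _ => mul_nonneg (W.m_pos y).le (mul_self_nonneg _))
    ⟨x, mem_lvl.mpr hx, mul_pos (W.m_pos x) (mul_self_pos.mpr hfx)⟩

theorem Standard.mul_apply_eq_coveredSum (hstd : W.Standard) {j : ℤ} {N : ℕ}
    (hl : W.LowerRegAt j N) (hN : 2 ≤ N) (hij : i + 1 = j) (hj : j ≤ W.d)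
    (hf : W.innerAt i f f ≤ W.innerAt i (W.Adj f) f) {x z : P} (hz : W.rk z = j) (hxz : x ⋖ z) :
    N * f x = coveredSum f z := by
  have hN1 : (0 : ℝ) < N - 1 := sub_pos.mpr (Nat.one_lt_cast.mpr hN)
  have hterm_nonneg : ∀ z x : P, 0 ≤ W.m z * (N * f x - coveredSum f z) ^ 2 := fun z x =>
    mul_nonneg (W.m_pos z).le (sq_nonneg _)
  have hzero : ∑ z ∈ W.lvl j, ∑ x with x ⋖ z, W.m z * (N * f x - coveredSum f z) ^ 2 = 0 := by
    refine le_antisymm ?_ (sum_nonneg fun z _ => sum_nonneg fun x _ => hterm_nonneg z x)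
    rw [hstd.sum_m_mul_sum_sub_coveredSum_sq hl (by lia) hij hj]
    exact mul_nonpos_of_nonneg_of_nonpos (by positivity) (sub_nonpos.mpr hf)
  rw [sum_eq_zero_iff_of_nonneg fun z _ => sum_nonneg fun x _ => hterm_nonneg z x] at hzero
  have hsum := hzero z (mem_lvl.mpr hz)
  rw [sum_eq_zero_iff_of_nonneg fun x _ => hterm_nonneg z x] at hsum
  simpa [(W.m_pos z).ne', sub_eq_zero] using hsum x (by simpa)

theorem Standard.lt_one_of_isNontrivEigAdj (hstd : W.Standard) {N : ℕ}
    (hl : W.LowerRegAt 1 N) (hN : 2 ≤ N) (hd : 1 ≤ W.d) (hconn : W.Connected) {lam : ℝ}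
    (hlam : W.IsNontrivEigAdj lam) : lam < 1 := by
  obtain ⟨f, ⟨y, hy, hfy⟩, hAf, hmean⟩ := hlam
  have hpos : 0 < W.innerAt 0 f f := innerAt_self_pos ⟨y, hy, hfy⟩
  by_contra! hge
  have hle : W.innerAt 0 f f ≤ W.innerAt 0 (W.Adj f) f := by
    rw [innerAt_eq_mul (b := 1) hAf (by simp), mul_one]
    exact le_mul_of_one_le_left hpos.le hge
  have hlocal : ∀ x z, W.rk z = 1 → x ⋖ z → N * f x = coveredSum f z := fun x z =>
    hstd.mul_apply_eq_coveredSum hl hN (zero_add 1) hd hle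
  have hconst : ∀ x ∈ W.lvl 0, f x = f y := fun x hx =>
    hconn.apply_eq (fun x y z hz hxz hyz => mul_left_cancel₀ (by positivity : (N : ℝ) ≠ 0) <|
      (hlocal x z hz hxz).trans (hlocal y z hz hyz).symm) (mem_lvl.mp hx) hy
  have hnorm : W.innerAt 0 f f = f y * W.innerAt 0 f fun _ => 1 := by
    rw [innerAt, innerAt, mul_sum]
    refine sum_congr rfl fun x hx => ?_
    rw [hconst x hx]
    ring
  rw [hnorm, hmean, mul_zero] at hpos
  exact lt_irrefl 0 hpos

theorem TwoSkeletonRegular.eigenvalue_le (hreg : W.TwoSkeletonRegular N₁ N₂ M R)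
    (hstd : W.Standard) (hd : 2 ≤ W.d) (hN₁ : 2 ≤ N₁) (hM : M ≠ 1) (hconn : W.Connected)
    {μ : ℝ} (hμ : μ < 1) (heig : ∀ x, W.rk x = 0 → ∀ c, W.IsNontrivEigAdjL x c → c ≤ μ)
    {lam : ℝ} (hlam : W.IsNontrivEigAdj lam) :
    lam ≤ (μ / (N₁ - 1) - (R - 1) / ((M - 1) * (N₁ - 1))) / (1 - μ) := by
  have hlt := hstd.lt_one_of_isNontrivEigAdj hreg.lower_one hN₁ (by lia) hconn hlam
  obtain ⟨f, hf, hAf, -⟩ := hlam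
  have hpos : 0 < W.innerAt 0 f f := innerAt_self_pos hf
  have htrickle := hreg.innerAt_adj_add_le hstd hd hN₁ hM heig f
  rw [innerAt_eq_mul (b := 1) hAf (by simp), innerAt_eq_mul hAf hAf] at htrickle
  set B : ℝ := (R - 1) / ((M - 1) * (N₁ - 1))
  have hN₁' : (N₁ : ℝ) - 1 ≠ 0 := (sub_pos.mpr (Nat.one_lt_cast.mpr hN₁)).ne'
  have hfactor : 0 ≤ ((1 - lam) * W.innerAt 0 f f) * (μ / (N₁ - 1) - B - lam * (1 - μ)) := by
    have hid : μ * (N₁ - 2) / (N₁ - 1) = μ - μ / (N₁ - 1) := by field_simp; ring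
    linear_combination htrickle + lam * W.innerAt 0 f f * hid
  rw [le_div_iff₀ (sub_pos.mpr hμ)]
  exact sub_nonneg.mp ((mul_nonneg_iff_of_pos_left (mul_pos (sub_pos.mpr hlt) hpos)).mp hfactor)

theorem TwoSkeletonRegular.le_eigenvalue (hreg : W.TwoSkeletonRegular N₁ N₂ M R)
    (hstd : W.Standard) (hd : 2 ≤ W.d) (hN₁ : 2 ≤ N₁) (hM : M ≠ 1) (hconn : W.Connected)
    {ν : ℝ} (hν : ν < 1) (heig : ∀ x, W.rk x = 0 → ∀ c, W.IsNontrivEigAdjL x c → ν ≤ c)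
    {lam : ℝ} (hlam : W.IsNontrivEigAdj lam) :
    (ν / (N₁ - 1) - (R - 1) / ((M - 1) * (N₁ - 1))) / (1 - ν) ≤ lam := by
  have hlt := hstd.lt_one_of_isNontrivEigAdj hreg.lower_one hN₁ (by lia) hconn hlam
  obtain ⟨f, hf, hAf, -⟩ := hlam
  have hpos : 0 < W.innerAt 0 f f := innerAt_self_pos hf
  have htrickle := hreg.le_innerAt_adj_add hstd hd hN₁ hM heig f
  rw [innerAt_eq_mul (b := 1) hAf (by simp), innerAt_eq_mul hAf hAf] at htrickle
  set B : ℝ := (R - 1) / ((M - 1) * (N₁ - 1))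
  have hN₁' : (N₁ : ℝ) - 1 ≠ 0 := (sub_pos.mpr (Nat.one_lt_cast.mpr hN₁)).ne'
  have hfactor : 0 ≤ ((1 - lam) * W.innerAt 0 f f) * (lam * (1 - ν) - (ν / (N₁ - 1) - B)) := by
    have hid : ν * (N₁ - 2) / (N₁ - 1) = ν - ν / (N₁ - 1) := by field_simp; ring
    linear_combination htrickle - lam * W.innerAt 0 f f * hid
  rw [div_le_iff₀ (sub_pos.mpr hν)]
  exact sub_nonneg.mp ((mul_nonneg_iff_of_pos_left (mul_pos (sub_pos.mpr hlt) hpos)).mp hfactor)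

theorem TwoSkeletonRegular.mul_sub_mul_eq (hreg : W.TwoSkeletonRegular N₁ N₂ M R)
    (hd : 2 ≤ W.d) : ((N₂ : ℝ) * N₁ - M) * R = M ^ 2 * (N₁ - 1) := by
  obtain ⟨x, hx⟩ := exists_rk_eq (W := W) (i := 0) (by lia) (by lia)
  obtain ⟨z, hxz⟩ := exists_covBy_of_rk_lt (W := W) (x := x) (by lia)
  have hz : W.rk z = 1 := by rw [W.rk_covBy x z hxz, hx]; rfl
  obtain ⟨u, hzu⟩ := exists_covBy_of_rk_lt (W := W) (x := z) (by lia)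
  have hu : W.rk u = 2 := by rw [W.rk_covBy z u hzu, hz]; rfl
  have hdeg := hreg.mul_card_atomsBelow_sub_one hu (mem_atomsBelow.mpr ⟨hx, hxz.lt.trans hzu.lt⟩)
  linear_combination M * hdeg - R * hreg.mul_card_atomsBelow hu

theorem TwoSkeletonRegular.trickling_constant_eq (hreg : W.TwoSkeletonRegular N₁ N₂ M R)
    (hd : 2 ≤ W.d) (hN₁ : N₁ ≠ 1) (hM : M ≠ 0) :
    ((N₂ : ℝ) * N₁ - M) * R * (R - 1) / ((M - 1) * (M : ℝ) ^ 2 * (N₁ - 1) ^ 2)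
      = (R - 1) / ((M - 1) * (N₁ - 1)) := by
  have hN₁' : (N₁ : ℝ) - 1 ≠ 0 := sub_ne_zero.mpr (Nat.cast_ne_one.mpr hN₁)
  have hM' : (M : ℝ) ^ 2 * (N₁ - 1) ≠ 0 :=
    mul_ne_zero (pow_ne_zero 2 (Nat.cast_ne_zero.mpr hM)) hN₁'
  rw [hreg.mul_sub_mul_eq hd, ← mul_div_mul_left (_ - 1) _ hM']
  ring

end Eigenvalues

end WGP

theorem stmt19_general {P : Type} [Fintype P] [PartialOrder P] (W : WGP P) (hd : 2 ≤ W.d)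
    (hstd : W.Standard) {N₁ N₂ M R : ℕ} (hreg : W.TwoSkeletonRegular N₁ N₂ M R)
    (hN₁ : 2 ≤ N₁) (hM : 2 ≤ M) (hconn : W.Connected) {ν μ : ℝ} (hνμ : ν ≤ μ) (hμ : μ < 1)
    (heig : ∀ x, W.rk x = 0 → ∀ c, W.IsNontrivEigAdjL x c → ν ≤ c ∧ c ≤ μ) {lam : ℝ}
    (hlam : W.IsNontrivEigAdj lam) :
    (ν / (N₁ - 1) - (N₂ * N₁ - M) * R * (R - 1) / ((M - 1) * M ^ 2 * (N₁ - 1) ^ 2)) / (1 - ν)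
        ≤ lam ∧
      lam ≤ (μ / (N₁ - 1) - (N₂ * N₁ - M) * R * (R - 1) / ((M - 1) * M ^ 2 * (N₁ - 1) ^ 2))
        / (1 - μ) := by
  rw [hreg.trickling_constant_eq hd (by lia) (by lia)]
  exact ⟨hreg.le_eigenvalue hstd hd hN₁ (by lia) hconn (hνμ.trans_lt hμ)
      (fun x hx c hc => (heig x hx c hc).1) hlam,
    hreg.eigenvalue_le hstd hd hN₁ (by lia) hconn hμ (fun x hx c hc => (heig x hx c hc).2) hlam⟩

/-- the trickling down theorem for `2`-skeleton regular
standard posets. -/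
theorem stmt19 {P : Type} [Fintype P] [PartialOrder P] (W : WGP P)
    (hd : 2 ≤ W.d) (hstd : W.Standard)
    (Nlow1 Nlow2 Nmid1 R : ℕ)
    (hl1 : W.LowerRegAt 1 Nlow1) (hl2 : W.LowerRegAt 2 Nlow2)
    (hm1 : W.MiddleRegAt 1 Nmid1) (hwye : W.WyeReg R)
    (hN1 : 3 ≤ Nlow1) (hN2 : 2 ≤ Nmid1)
    (hR : ((Nlow1 : ℝ) - 2)
      < ((Nlow2 : ℝ) * (Nlow1 : ℝ) / (Nmid1 : ℝ) - 2) * (R : ℝ))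
    (hconn : W.Connected)
    (hlconn : ∀ x : P, W.rk x = 0 → W.LinkConnected x)
    (ν μ : ℝ) (hνμ : ν ≤ μ) (hμ1 : μ < 1)
    (heig : ∀ x : P, W.rk x = 0 → ∀ c : ℝ, W.IsNontrivEigAdjL x c → ν ≤ c ∧ c ≤ μ) :
    ∀ lam : ℝ, W.IsNontrivEigAdj lam →
      (ν / ((Nlow1 : ℝ) - 1)
          - ((Nlow2 : ℝ) * (Nlow1 : ℝ) - (Nmid1 : ℝ)) * (R : ℝ) * ((R : ℝ) - 1) /
              (((Nmid1 : ℝ) - 1) * (Nmid1 : ℝ) ^ 2 * ((Nlow1 : ℝ) - 1) ^ 2)) / (1 - ν)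
        ≤ lam ∧
      lam ≤ (μ / ((Nlow1 : ℝ) - 1)
          - ((Nlow2 : ℝ) * (Nlow1 : ℝ) - (Nmid1 : ℝ)) * (R : ℝ) * ((R : ℝ) - 1) /
              (((Nmid1 : ℝ) - 1) * (Nmid1 : ℝ) ^ 2 * ((Nlow1 : ℝ) - 1) ^ 2)) / (1 - μ) := by
  exact fun _ => stmt19_general W hd hstd ⟨hl1, hl2, hm1, hwye⟩ (by lia) hN2 hconn hνμ hμ1 heig
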